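/- For all real x > 0, x ≤ (π/2)·arsinh(q(x))·√(1 + q(x)²), where q(x) = x/arsinh x. -/

import Mathlib

open Real

/-- `q(x) = x / arsinh x`. -/
noncomputable def qf (x : ℝ) : ℝ := x / Real.arsinh x

lemma key_uv (t : ℝ) (h1 : 1.9 ≤ t) (h2 : t ≤ 3.26) :
    0.0125 ≤ exp (-(1.2734 * t)) - exp (-(2 * t)) := by
  have e1 := Real.exp_one_gt_d9
  have e2 := Real.exp_one_lt_d9
  have f1 : exp (-1) ≤ 0.368 := by
    rw [exp_neg]; rw [inv_le_comm₀ (exp_pos _) (by norm_num)]; norm_num; linarith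
  have f2 : 0.36787 ≤ exp (-1) := by
    rw [exp_neg]; rw [le_inv_comm₀ (by norm_num) (exp_pos _)]; norm_num; linarith
  have f2' : exp (-2) ≤ 0.13543 := by
    have : exp (-2) = exp (-1) ^ 2 := by rw [← exp_nat_mul]; norm_num
    rw [this]; nlinarith [exp_pos (-1)]
  have f4 : 0.0183 ≤ exp (-4) := by
    have : exp (-4) = exp (-1) ^ 4 := by rw [← exp_nat_mul]; norm_num
    rw [this]
    calc (0.0183:ℝ) ≤ 0.36787 ^ 4 := by norm_num
      _ ≤ _ := by gcongr
  have hs : exp (-(2 * t)) = exp (-(1.2734 * t)) * exp (-(0.7266 * t)) := by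
    rw [← exp_add]; ring_nf
  rw [hs]
  rcases le_total t 2.8 with h | h
  · have a : exp (-(0.7266 * t)) ≤ exp (-1) := exp_le_exp.2 (by linarith)
    have b : exp (-4) * (1 + 0.43) ≤ exp (-(1.2734 * t)) := by
      calc _ ≤ exp (-4) * exp 0.43 := by
            gcongr; linarith [add_one_le_exp (0.43:ℝ)]
        _ = exp (-3.57) := by rw [← exp_add]; norm_num
        _ ≤ _ := exp_le_exp.2 (by linarith)
    nlinarith [exp_pos (-(1.2734 * t))]
  · have a : exp (-(0.7266 * t)) ≤ exp (-2) := exp_le_exp.2 (by linarith)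
    have b : exp (-4) * (1 - 0.076) ^ 2 ≤ exp (-(1.2734 * t)) := by
      calc _ ≤ exp (-4) * (exp (-0.076)) ^ 2 := by
            gcongr
            linarith [add_one_le_exp (-0.076:ℝ)]
        _ = exp (-4.152) := by rw [← exp_nat_mul, ← exp_add]; norm_num
        _ ≤ _ := exp_le_exp.2 (by linarith)
    nlinarith [exp_pos (-(1.2734 * t))]

lemma key_E (t : ℝ) (h0 : 0 < t) :
    t * (1 - exp (-(1.2734 * t))) ≤ exp (0.3633 * t) * (1 - exp (-(2 * t))) := by
  have e1 := Real.exp_one_gt_d9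
  have hu1 : exp (-(1.2734 * t)) ≤ 1 := exp_le_one_iff.2 (by linarith)
  have hvu : exp (-(2 * t)) ≤ exp (-(1.2734 * t)) := exp_le_exp.2 (by linarith)
  have hE := exp_pos (0.3633 * t)
  by_cases hm : 1.9 ≤ t ∧ t ≤ 3.26
  · have k := key_uv t hm.1 hm.2
    have hK : 0.9875 * t ≤ exp (0.3633 * t) := by
      have : exp (0.3633 * t) = exp 1 * exp (0.3633 * t - 1) := by
        rw [← exp_add]; ring_nf
      have := add_one_le_exp (0.3633 * t - 1)
      nlinarith
    have hv := exp_pos (-(2 * t))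
    calc t * (1 - exp (-(1.2734 * t))) ≤ t * (0.9875 * (1 - exp (-(2 * t)))) := by
          gcongr; linarith
      _ = (0.9875 * t) * (1 - exp (-(2 * t))) := by ring
      _ ≤ _ := by
          apply mul_le_mul_of_nonneg_right hK; linarith
  · have hK : t ≤ exp (0.3633 * t) := by
      by_cases h : t ≤ 1.9
      · have := Real.quadratic_le_exp_of_nonneg (x := 0.3633 * t) (by positivity)
        nlinarith
      · have h3 : 3.26 ≤ t := by
          by_contra h'
          exact hm ⟨by linarith, by linarith⟩
        have a := Real.quadratic_le_exp_of_nonneg (x := 0.184) (by norm_num)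
        have b := add_one_le_exp (0.3633 * t - 1.184)
        have c : exp (0.3633 * t) = (exp 1 * exp 0.184) * exp (0.3633 * t - 1.184) := by
          rw [← exp_add, ← exp_add]; ring_nf
        have d : 3.264 ≤ exp 1 * exp 0.184 := by
          norm_num at a ⊢
          nlinarith
        rw [c]
        nlinarith
    apply mul_le_mul hK <;> linarith

lemma key_sinh (t : ℝ) (h0 : 0 < t) : t * sinh (0.6367 * t) ≤ sinh t := by
  have k := key_E t h0
  rw [sinh_eq, sinh_eq]
  have a : exp (-(0.6367 * t)) = exp (0.6367 * t) * exp (-(1.2734 * t)) := by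
    rw [← exp_add]; ring_nf
  have b : exp (-t) = exp t * exp (-(2 * t)) := by
    rw [← exp_add]; ring_nf
  have c : exp t = exp (0.6367 * t) * exp (0.3633 * t) := by
    rw [← exp_add]; ring_nf
  rw [b, a, c]
  have := mul_le_mul_of_nonneg_left k (exp_pos (0.6367 * t)).le
  linarith

theorem stmt11 : ∀ x : ℝ, 0 < x →
    x ≤ (π / 2) * Real.arsinh (qf x) * Real.sqrt (1 + qf x ^ 2) := by
  intro x hx
  have ht : 0 < arsinh x := arsinh_pos_iff.2 hx
  have k := key_sinh _ ht
  rw [sinh_arsinh] at k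
  have hq : sinh (0.6367 * arsinh x) ≤ qf x := by
    unfold qf; rw [le_div_iff₀ ht]; linarith
  have hq0 : 0 < qf x := div_pos hx ht
  have ha : 0.6367 * arsinh x ≤ arsinh (qf x) := by
    have := arsinh_le_arsinh.2 hq
    rwa [arsinh_sinh] at this
  have hs : qf x ≤ sqrt (1 + qf x ^ 2) := by
    apply Real.le_sqrt_of_sq_le; linarith
  have hx' : x = arsinh x * qf x := by
    unfold qf; field_simp
  have hp : arsinh x ≤ π / 2 * arsinh (qf x) := by
    have := Real.pi_gt_d4
    nlinarith
  calc x = arsinh x * qf x := hx'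
    _ ≤ _ := mul_le_mul hp hs hq0.le (by linarith)
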